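/- Weighted Ehrhart reciprocity (polynomiality part): if P \subseteq \mathbb{R}^m is a lattice polytope and f: \mathbb{R}^m \to \mathbb{R} is a polynomial function of degree p, then the function L_{P,f}(n) = \sum_{z \in nP \cap \mathbb{Z}^m} f(z) agrees with a polynomial in n of degree at most \dim P + p, for all positive integers n. -/

import Mathlib

open scoped Pointwise

/-!
Order the vertices and represent each point of the cone over `P × {1}` by its lexicographically
least vector of nonnegative coefficients. The supports of these vectors are affinely independent,
so the lattice points of `n P` are partitioned according to the simplex `σ` of a triangulation whose
relatively open cone contains them.

In the open cone over `σ` the coefficients are written uniquely as `c - t` with `c` a positive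
integer vector on `σ` and `t ∈ [0, 1) ^ σ`. Here `t` runs through the lattice points of a half-open
parallelepiped, a finite set independent of `n`, and `c` through the compositions of `n + |t|`.
Subtracting `t`, rather than adding it, keeps `n + |t|` positive, so that one polynomial serves all
`n ≥ 1`.

A monomial summed over compositions is a coefficient of a product of power series `∑ k ^ e * X ^ k`.
By Faulhaber's formula each convolution raises the degree by one, so the degree is at most
`|σ| - 1 + deg f ≤ dim P + deg f`.
-/

section PolyOnPos

open Finset Polynomial

/-- The functions `ℕ → K` that agree at all positive integers with a polynomial of degree at most
`d`. The value at `0` is unconstrained. -/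
def polyOnPos (K : Type*) [CommRing K] (d : ℕ) : Submodule K (ℕ → K) where
  carrier := {u | ∃ q : K[X], q.natDegree ≤ d ∧ ∀ n : ℕ, 0 < n → u n = q.eval (n : K)}
  zero_mem' := ⟨0, by simp, by simp⟩
  add_mem' := by
    rintro u v ⟨q, hq, hu⟩ ⟨r, hr, hv⟩
    exact ⟨q + r, natDegree_add_le_of_degree_le hq hr, fun n hn => by simp [hu n hn, hv n hn]⟩
  smul_mem' := by
    rintro a u ⟨q, hq, hu⟩
    exact ⟨a • q, (natDegree_smul_le a q).trans hq, fun n hn => by simp [hu n hn]⟩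

section CommRing

variable {K : Type*} [CommRing K] {d e : ℕ} {u v : ℕ → K}

lemma polyOnPos_mono : Monotone (polyOnPos K) :=
  fun _ _ hde _ ⟨q, hq, hu⟩ => ⟨q, hq.trans hde, hu⟩

lemma eval_natCast_mem_polyOnPos (q : K[X]) :
    (fun n : ℕ => q.eval (n : K)) ∈ polyOnPos K q.natDegree :=
  ⟨q, le_rfl, fun _ _ => rfl⟩

lemma natCast_pow_mem_polyOnPos (e : ℕ) : (fun n : ℕ => (n : K) ^ e) ∈ polyOnPos K e :=
  ⟨X ^ e, natDegree_X_pow_le e, fun n _ => by simp⟩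

lemma mem_polyOnPos_congr (h : ∀ n, 0 < n → u n = v n) (hv : v ∈ polyOnPos K d) :
    u ∈ polyOnPos K d := by
  obtain ⟨q, hq, hv⟩ := hv
  exact ⟨q, hq, fun n hn => (h n hn).trans (hv n hn)⟩

lemma mul_mem_polyOnPos (hu : u ∈ polyOnPos K d) (hv : v ∈ polyOnPos K e) :
    u * v ∈ polyOnPos K (d + e) := by
  obtain ⟨q, hq, hu⟩ := hu
  obtain ⟨r, hr, hv⟩ := hv
  exact ⟨q * r, natDegree_mul_le_of_le hq hr, fun n hn => by simp [hu n hn, hv n hn]⟩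

lemma comp_add_mem_polyOnPos (hu : u ∈ polyOnPos K d) (k : ℕ) :
    (fun n => u (n + k)) ∈ polyOnPos K d := by
  obtain ⟨q, hq, hu⟩ := hu
  refine ⟨q.comp (X + C (k : K)), natDegree_comp_le.trans ?_, fun n hn => ?_⟩
  · refine (Nat.mul_le_mul hq ?_).trans_eq (mul_one d)
    exact natDegree_add_le_of_degree_le natDegree_X_le (by simp)
  · simp [hu (n + k) (by lia)]

lemma finsum_mem_biUnion_mem_polyOnPos {α β : Type*} {I : Set α} {S : α → ℕ → Set β} {g : β → K}
    (hI : I.Finite) (hdisj : ∀ n, I.PairwiseDisjoint fun i => S i n)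
    (hfin : ∀ i ∈ I, ∀ n, (S i n).Finite)
    (h : ∀ i ∈ I, (fun n => ∑ᶠ x ∈ S i n, g x) ∈ polyOnPos K d) :
    (fun n => ∑ᶠ x ∈ ⋃ i ∈ I, S i n, g x) ∈ polyOnPos K d := by
  have hsum : (fun n => ∑ᶠ x ∈ ⋃ i ∈ I, S i n, g x) =
      ∑ i ∈ hI.toFinset, fun n => ∑ᶠ x ∈ S i n, g x := by
    funext n
    rw [finsum_mem_biUnion (hdisj n) hI fun i hi => hfin i hi n,
      finsum_mem_eq_finite_toFinset_sum _ hI, Finset.sum_apply]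
  rw [hsum]
  exact sum_mem fun i hi => h i (hI.mem_toFinset.1 hi)

end CommRing

section Field

variable {K : Type*} [Field K] [CharZero K]

lemma sum_range_pow_mem_polyOnPos (e : ℕ) :
    (fun n : ℕ => ∑ j ∈ range n, (j : K) ^ e) ∈ polyOnPos K (e + 1) := by
  have faulhaber : (fun n : ℕ => ∑ j ∈ range n, (j : K) ^ e) =
      ∑ i ∈ range (e + 1), ((_root_.bernoulli i * (e + 1).choose i / (e + 1) : ℚ) : K) •
        fun n : ℕ => (n : K) ^ (e + 1 - i) := by
    funext n
    have h := congrArg (Rat.cast : ℚ → K) (sum_range_pow n e)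
    push_cast at h
    simp only [h, Finset.sum_apply, Pi.smul_apply, smul_eq_mul]
    exact sum_congr rfl fun i _ => by push_cast; ring
  rw [faulhaber]
  exact sum_mem fun i _ => Submodule.smul_mem _ _
    (polyOnPos_mono (Nat.sub_le _ _) (natCast_pow_mem_polyOnPos _))

lemma sum_range_eval_mem_polyOnPos (q : K[X]) :
    (fun n : ℕ => ∑ j ∈ range n, q.eval (j : K)) ∈ polyOnPos K (q.natDegree + 1) := by
  have expand : (fun n : ℕ => ∑ j ∈ range n, q.eval (j : K)) =
      ∑ i ∈ range (q.natDegree + 1), q.coeff i • fun n : ℕ => ∑ j ∈ range n, (j : K) ^ i := by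
    funext n
    simp only [eval_eq_sum_range, Finset.sum_apply, Pi.smul_apply, smul_eq_mul, mul_sum]
    exact sum_comm
  rw [expand]
  exact sum_mem fun i hi => Submodule.smul_mem _ _
    (polyOnPos_mono (mem_range.1 hi) (sum_range_pow_mem_polyOnPos i))

lemma sum_range_eval_sub_mul_eval_mem_polyOnPos (q r : K[X]) :
    (fun n : ℕ => ∑ j ∈ range n, q.eval ((n : K) - j) * r.eval (j : K)) ∈
      polyOnPos K (q.natDegree + r.natDegree + 1) := by
  have taylor_expand : (fun n : ℕ => ∑ j ∈ range n, q.eval ((n : K) - j) * r.eval (j : K)) =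
      ∑ i ∈ range (q.natDegree + 1), (fun n : ℕ => (hasseDeriv i q).eval (n : K)) *
        fun n : ℕ => ∑ j ∈ range n, ((-X) ^ i * r).eval (j : K) := by
    funext n
    have h (j : ℕ) : q.eval ((n : K) - j) =
        ∑ i ∈ range (q.natDegree + 1), (hasseDeriv i q).eval (n : K) * (-(j : K)) ^ i := by
      rw [sub_eq_neg_add, ← taylor_eval, eval_eq_sum_range, natDegree_taylor]
      simp only [taylor_coeff]
    simp only [h, Finset.sum_apply, Pi.mul_apply, mul_sum, sum_mul, eval_mul, eval_pow, eval_neg,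
      eval_X, mul_assoc]
    exact sum_comm
  rw [taylor_expand]
  refine sum_mem fun i hi => polyOnPos_mono ?_ (mul_mem_polyOnPos
    (eval_natCast_mem_polyOnPos _) (sum_range_eval_mem_polyOnPos _))
  have hX : ((-X : K[X]) ^ i * r).natDegree ≤ i + r.natDegree :=
    natDegree_mul_le_of_le (natDegree_pow_le_of_le i (by simp) |>.trans_eq (mul_one i)) le_rfl
  have := natDegree_hasseDeriv_le q i
  have := mem_range.1 hi
  lia

end Field

end PolyOnPos

section PowerSeries

open Finset Polynomial
open scoped PowerSeries

variable {K : Type*} [Field K] [CharZero K]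

lemma coeff_mul_mem_polyOnPos {f g : K⟦X⟧} {d e : ℕ}
    (hf₀ : PowerSeries.coeff 0 f = 0) (hg₀ : PowerSeries.coeff 0 g = 0)
    (hf : (PowerSeries.coeff · f) ∈ polyOnPos K d) (hg : (PowerSeries.coeff · g) ∈ polyOnPos K e) :
    (PowerSeries.coeff · (f * g)) ∈ polyOnPos K (d + e + 1) := by
  obtain ⟨q, hq, hf⟩ := hf
  obtain ⟨r, hr, hg⟩ := hg
  beta_reduce at hf hg
  -- On `0 < j < n` the summands agree; the term `j = n` vanishes and `j = 0` needs a correction.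
  refine mem_polyOnPos_congr
    (v := (fun n : ℕ => ∑ j ∈ range n, q.eval ((n : K) - j) * r.eval (j : K)) -
      r.eval 0 • fun n : ℕ => q.eval (n : K)) (fun n hn => ?_) (sub_mem ?_ ?_)
  · obtain ⟨n, rfl⟩ := Nat.exists_eq_add_one.2 hn
    rw [mul_comm f, PowerSeries.coeff_mul, Nat.sum_antidiagonal_eq_sum_range_succ_mk,
      sum_range_succ, sum_range_succ', Pi.sub_apply, Pi.smul_apply, sum_range_succ']
    simp only [hg₀, hf₀, Nat.sub_self, zero_mul, mul_zero, add_zero, Nat.cast_zero, sub_zero,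
      smul_eq_mul, mul_comm (r.eval 0), add_sub_cancel_right]
    refine sum_congr rfl fun j hj => ?_
    have hj := mem_range.1 hj
    rw [hg _ j.succ_pos, hf _ (by lia), Nat.cast_sub (by lia), mul_comm]
  · exact polyOnPos_mono (by lia) (sum_range_eval_sub_mul_eval_mem_polyOnPos q r)
  · exact Submodule.smul_mem _ _ (polyOnPos_mono (by lia) (eval_natCast_mem_polyOnPos q))

lemma coeff_prod_mem_polyOnPos {ι : Type*} {s : Finset ι} {f : ι → K⟦X⟧} {e : ι → ℕ}
    (hf₀ : ∀ i ∈ s, PowerSeries.coeff 0 (f i) = 0)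
    (hf : ∀ i ∈ s, (PowerSeries.coeff · (f i)) ∈ polyOnPos K (e i)) :
    (PowerSeries.coeff · (∏ i ∈ s, f i)) ∈ polyOnPos K (∑ i ∈ s, (e i + 1) - 1) := by
  induction s using Finset.cons_induction with
  | empty => exact ⟨0, by simp, fun n hn => by simp [PowerSeries.coeff_one, hn.ne']⟩
  | cons i s hi ih =>
    obtain rfl | ⟨k, hk⟩ := s.eq_empty_or_nonempty
    · simpa using hf i (mem_cons_self _ _)
    rw [prod_cons, sum_cons]
    have hprod₀ : PowerSeries.coeff 0 (∏ j ∈ s, f j) = 0 := by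
      rw [PowerSeries.coeff_zero_eq_constantCoeff_apply, map_prod]
      exact prod_eq_zero hk (by simpa using hf₀ k (mem_cons_of_mem hk))
    have hpos : e k + 1 ≤ ∑ j ∈ s, (e j + 1) :=
      single_le_sum (f := fun j => e j + 1) (fun _ _ => Nat.zero_le _) hk
    refine polyOnPos_mono ?_ (coeff_mul_mem_polyOnPos (hf₀ i (mem_cons_self _ _)) hprod₀
      (hf i (mem_cons_self _ _)) (ih (fun j hj => hf₀ j (mem_cons_of_mem hj))
        fun j hj => hf j (mem_cons_of_mem hj)))
    lia

end PowerSeries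

section Compositions

open Finset
open scoped PowerSeries

variable {ι : Type*} [DecidableEq ι]

/-- The compositions of `n` with parts indexed by `s`: families of natural numbers with sum `n` that
are positive on `s` and vanish outside `s`. -/
def compositionsOn (s : Finset ι) (n : ℕ) : Finset (ι →₀ ℕ) :=
  {c ∈ s.finsuppAntidiag n | c.support = s}

lemma mem_compositionsOn {s : Finset ι} {n : ℕ} {c : ι →₀ ℕ} :
    c ∈ compositionsOn s n ↔ c.support = s ∧ c.degree = n := by
  rw [compositionsOn, mem_filter, mem_finsuppAntidiag, Finsupp.degree_apply]
  constructor
  · rintro ⟨⟨hsum, -⟩, rfl⟩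
    exact ⟨rfl, hsum⟩
  · rintro ⟨rfl, hsum⟩
    exact ⟨⟨hsum, subset_rfl⟩, rfl⟩

variable {K : Type*} [Field K] [CharZero K]

lemma sum_compositionsOn_prod_pow_mem_polyOnPos (s : Finset ι) (e : ι → ℕ) :
    (fun n => ∑ c ∈ compositionsOn s n, ∏ i ∈ s, (c i : K) ^ e i) ∈
      polyOnPos K (∑ i ∈ s, (e i + 1) - 1) := by
  let f (i : ι) : K⟦X⟧ := PowerSeries.mk fun n => if n = 0 then 0 else (n : K) ^ e i
  have hcoeff : (fun n => ∑ c ∈ compositionsOn s n, ∏ i ∈ s, (c i : K) ^ e i) =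
      (PowerSeries.coeff · (∏ i ∈ s, f i)) := by
    funext n
    rw [PowerSeries.coeff_prod, compositionsOn, sum_filter]
    refine sum_congr rfl fun c hc => ?_
    split_ifs with hs
    · exact prod_congr rfl fun i hi => by simp [f, Finsupp.mem_support_iff.1 (hs ▸ hi)]
    · obtain ⟨i, hi, hci⟩ := not_subset.1 fun h => hs ((mem_finsuppAntidiag.1 hc).2.antisymm h)
      exact (prod_eq_zero hi (by simp [f, Finsupp.notMem_support_iff.1 hci])).symm
  rw [hcoeff]
  exact coeff_prod_mem_polyOnPos (fun i _ => by simp [f]) fun i _ =>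
    mem_polyOnPos_congr (fun n hn => by simp [f, hn.ne']) (natCast_pow_mem_polyOnPos (e i))

lemma sum_compositionsOn_eval_mem_polyOnPos (s : Finset ι) (f : MvPolynomial ι K) :
    (fun n => ∑ c ∈ compositionsOn s n, MvPolynomial.eval (fun i => (c i : K)) f) ∈
      polyOnPos K (s.card - 1 + f.totalDegree) := by
  have expand : (fun n => ∑ c ∈ compositionsOn s n, MvPolynomial.eval (fun i => (c i : K)) f) =
      ∑ e ∈ f.support, f.coeff e •
        fun n => ∑ c ∈ compositionsOn s n, ∏ i ∈ e.support, (c i : K) ^ e i := by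
    funext n
    simp only [MvPolynomial.eval_eq, Finset.sum_apply, Pi.smul_apply, smul_eq_mul, mul_sum]
    exact sum_comm
  rw [expand]
  refine sum_mem fun e he => Submodule.smul_mem _ _ ?_
  by_cases hes : e.support ⊆ s
  · have hprod (c : ι →₀ ℕ) : ∏ i ∈ e.support, (c i : K) ^ e i = ∏ i ∈ s, (c i : K) ^ e i :=
      prod_subset hes fun i _ hi => by simp [Finsupp.notMem_support_iff.1 hi]
    have hdeg : ∑ i ∈ s, e i ≤ f.totalDegree :=
      (Finsupp.sum_of_support_subset e hes (fun _ k => k) fun _ _ => rfl).symm.trans_le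
        (MvPolynomial.le_totalDegree he)
    simp only [hprod]
    refine polyOnPos_mono ?_ (sum_compositionsOn_prod_pow_mem_polyOnPos s e)
    obtain rfl | hs := s.eq_empty_or_nonempty
    · simp
    have := hs.card_pos
    rw [sum_add_distrib, sum_const, smul_eq_mul, mul_one]
    lia
  · obtain ⟨i, hi, his⟩ := not_subset.1 hes
    refine mem_polyOnPos_congr (v := 0) (fun n _ => sum_eq_zero fun c hc => ?_) (zero_mem _)
    have hci : c i = 0 := by
      rwa [← Finsupp.notMem_support_iff, (mem_compositionsOn.1 hc).1]
    exact prod_eq_zero hi (by simp [hci, Finsupp.mem_support_iff.1 hi])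

end Compositions

section AffineSubstitution

open MvPolynomial

variable {R ι κ : Type*} [CommRing R]

lemma totalDegree_bind₁_le {g : κ → MvPolynomial ι R} (hg : ∀ j, (g j).totalDegree ≤ 1)
    (f : MvPolynomial κ R) : (bind₁ g f).totalDegree ≤ f.totalDegree := by
  rw [bind₁, aeval_def, eval₂_eq]
  refine totalDegree_finsetSum_le fun d hd => ?_
  calc (algebraMap R _ (f.coeff d) * ∏ j ∈ d.support, g j ^ d j).totalDegree
      ≤ 0 + ∑ j ∈ d.support, d j := by
        refine (totalDegree_mul _ _).trans (add_le_add (totalDegree_C _).le ?_)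
        refine (totalDegree_finsetProd _ _).trans (Finset.sum_le_sum fun j _ => ?_)
        exact (totalDegree_pow _ _).trans ((Nat.mul_le_mul_left _ (hg j)).trans_eq (mul_one _))
    _ ≤ f.totalDegree := (zero_add _).trans_le (le_totalDegree hd)

lemma exists_eval_affineMap_eq [Finite ι] (φ : (ι → R) →ᵃ[R] (κ → R)) (f : MvPolynomial κ R) :
    ∃ g : MvPolynomial ι R, g.totalDegree ≤ f.totalDegree ∧ ∀ x, eval x g = eval (φ x) f := by
  classical
  cases nonempty_fintype ι
  let g (j : κ) : MvPolynomial ι R :=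
    C (φ 0 j) + ∑ i, C (φ.linear (fun k => if i = k then 1 else 0) j) * X i
  have hg (j : κ) : (g j).totalDegree ≤ 1 := by
    refine (totalDegree_add _ _).trans (max_le (by simp) (totalDegree_finsetSum_le fun i _ => ?_))
    refine (totalDegree_mul _ _).trans ?_
    rw [totalDegree_C, zero_add]
    exact totalDegree_monomial_le _ _ |>.trans (by simp)
  have hφ (x : ι → R) (j : κ) : eval x (g j) = φ x j := by
    rw [φ.decomp, Pi.add_apply, φ.linear.pi_apply_eq_sum_univ]
    simp [g, Finset.sum_apply, mul_comm, add_comm]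
  refine ⟨bind₁ g f, totalDegree_bind₁_le hg f, fun x => ?_⟩
  rw [← funext (hφ x)]
  simpa [aeval_eq_eval] using aeval_bind₁ x g f

end AffineSubstitution

section LexMin

open Function

lemma exists_pos_smul_le_of_support_subset {ι : Type*} [Finite ι] {a b : ι → ℝ} (ha : 0 ≤ a)
    (hba : support b ⊆ support a) : ∃ ε : ℝ, 0 < ε ∧ ε • b ≤ a := by
  have hsmall : ∀ᶠ ε in nhdsWithin (0 : ℝ) (Set.Ioi 0), ∀ i, ε * b i ≤ a i := by
    refine Filter.eventually_all.2 fun i => ?_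
    obtain hi | hi := eq_or_ne (a i) 0
    · simp [hi, notMem_support.1 (mt (@hba i) (notMem_support.2 hi))]
    · have hcont : Continuous fun ε : ℝ => ε * b i := by fun_prop
      refine ((hcont.tendsto' 0 0 (zero_mul _)).mono_left nhdsWithin_le_nhds).eventually_le_const ?_
      exact (ha i).lt_of_ne' hi
  obtain ⟨ε, hle, hε⟩ := (hsmall.and self_mem_nhdsWithin).exists
  exact ⟨ε, hε, hle⟩

lemma exists_toLex_le_of_isCompact {ι : Type*} [LinearOrder ι] [Finite ι] {S : Set (ι → ℝ)}
    (hS : IsCompact S) (hne : S.Nonempty) : ∃ a ∈ S, ∀ b ∈ S, toLex a ≤ toLex b := by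
  cases nonempty_fintype ι
  have partial_min (s : Finset ι) :
      ∃ a ∈ S, ∀ b ∈ S, ∀ i ∈ s, (∀ j ∈ s, j < i → b j = a j) → a i ≤ b i := by
    induction s using Finset.induction_on_max with
    | empty =>
      obtain ⟨a, ha⟩ := hne
      exact ⟨a, ha, by simp⟩
    | insert i s hi ih =>
      obtain ⟨a, ha, hmin⟩ := ih
      have hclosed : IsClosed {b : ι → ℝ | ∀ j ∈ s, b j = a j} := by
        simp only [Set.ofPred_forall]
        exact isClosed_biInter fun j _ => isClosed_eq (continuous_apply j) continuous_const
      obtain ⟨c, ⟨hcS, hca⟩, hc⟩ := (hS.inter_right hclosed).exists_isMinOn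
        ⟨a, ha, fun _ _ => rfl⟩ (continuous_apply i).continuousOn
      refine ⟨c, hcS, fun b hb k hk hbc => ?_⟩
      obtain rfl | hk := Finset.mem_insert.1 hk
      · refine hc ⟨hb, fun j hj => ?_⟩
        rw [hbc j (Finset.mem_insert_of_mem hj) (hi j hj), hca j hj]
      · rw [hca k hk]
        refine hmin b hb k hk fun j hj hjk => ?_
        rw [hbc j (Finset.mem_insert_of_mem hj) hjk, hca j hj]
  obtain ⟨a, ha, hmin⟩ := partial_min Finset.univ
  refine ⟨a, ha, fun b hb => not_lt.1 ?_⟩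
  rintro ⟨i, hlt, hi⟩
  exact (hmin b hb i (Finset.mem_univ i) fun j _ hj => hlt j hj).not_gt hi

variable {ι V : Type*} [LinearOrder ι] [AddCommGroup V] [Module ℝ V]

/-- `a` is the lexicographically least nonnegative solution `x` of `A x = A a`. When the columns of
`A` homogenize the vertices of a polytope, the supports of these solutions are the faces of a
triangulation of it. -/
def IsLexMin (A : (ι → ℝ) →ₗ[ℝ] V) (a : ι → ℝ) : Prop :=
  0 ≤ a ∧ ∀ b, 0 ≤ b → A b = A a → toLex a ≤ toLex b

namespace IsLexMin

variable {A : (ι → ℝ) →ₗ[ℝ] V} {a b x : ι → ℝ}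

lemma eq_of_map_eq [Finite ι] (ha : IsLexMin A a) (hb : IsLexMin A b) (h : A a = A b) : a = b :=
  toLex.injective (le_antisymm (ha.2 b hb.1 h.symm) (hb.2 a ha.1 h))

lemma of_support_subset [Finite ι] (ha : IsLexMin A a) (hb : 0 ≤ b)
    (hba : support b ⊆ support a) : IsLexMin A b := by
  obtain ⟨ε, hε, hle⟩ := exists_pos_smul_le_of_support_subset ha.1 hba
  refine ⟨hb, fun c hc hcb => not_lt.1 ?_⟩
  rintro ⟨i, hlt, hi⟩
  have hnonneg : 0 ≤ a - ε • b + ε • c := add_nonneg (sub_nonneg.2 hle) (smul_nonneg hε.le hc)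
  refine (ha.2 _ hnonneg (by simp [hcb])).not_gt ⟨i, fun j hj => ?_, ?_⟩
  · simp [show c j = b j from hlt j hj]
  · have := mul_lt_mul_of_pos_left hi hε
    simp only [Pi.toLex_apply, Pi.add_apply, Pi.sub_apply, Pi.smul_apply, smul_eq_mul] at this ⊢
    linarith

lemma eq_zero_of_map_eq_zero [Finite ι] (ha : IsLexMin A a) (hx : support x ⊆ support a)
    (h : A x = 0) : x = 0 := by
  have hpos : IsLexMin A x⁺ := ha.of_support_subset (posPart_nonneg x) <|
    (support_comp_subset posPart_zero x).trans hx
  have hneg : IsLexMin A x⁻ := ha.of_support_subset (negPart_nonneg x) <|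
    (support_comp_subset negPart_zero x).trans hx
  rw [← posPart_sub_negPart x, hpos.eq_of_map_eq hneg, sub_self]
  rw [← sub_eq_zero, ← map_sub, posPart_sub_negPart, h]

end IsLexMin

end LexMin

section Cone

open Finset Function

variable {ι E : Type*} [AddCommGroup E] [Module ℝ E] {v : ι → E}

lemma card_le_finrank_vectorSpan_add_one [Finite ι] {σ : Finset ι}
    (hσ : AffineIndependent ℝ (fun i : σ => v i)) :
    σ.card ≤ Module.finrank ℝ (vectorSpan ℝ (Set.range v)) + 1 := by
  refine (Fintype.card_coe σ).symm.trans_le (hσ.card_le_finrank_succ.trans ?_)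
  exact Nat.add_le_add_right
    (Submodule.finrank_mono (vectorSpan_mono ℝ (Set.range_comp_subset_range _ v))) 1

variable [Fintype ι]

/-- The linear map sending the `i`-th basis vector to `(v i, 1)`. It parametrizes the cone over the
convex hull of the `v i`, placed at height `1`; the last coordinate is the dilation factor. -/
noncomputable def coneMap (v : ι → E) : (ι → ℝ) →ₗ[ℝ] E × ℝ :=
  Fintype.linearCombination ℝ fun i => (v i, (1 : ℝ))

lemma coneMap_apply (v : ι → E) (a : ι → ℝ) : coneMap v a = (∑ i, a i • v i, ∑ i, a i) := by
  simp [coneMap, Fintype.linearCombination_apply, Prod.ext_iff, Prod.fst_sum, Prod.snd_sum]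

lemma mem_smul_convexHull_range_iff {r : ℝ} (hr : 0 < r) {x : E} :
    x ∈ r • convexHull ℝ (Set.range v) ↔ ∃ a, 0 ≤ a ∧ coneMap v a = (x, r) := by
  classical
  let A := Fintype.linearCombination ℝ v
  have hull : convexHull ℝ (Set.range v) = A '' stdSimplex ℝ ι := by
    rw [← convexHull_rangle_single_eq_stdSimplex, A.image_convexHull, ← Set.range_comp]
    congr 2
    funext i
    simp [A]
  have hcone (a : ι → ℝ) : coneMap v a = (x, r) ↔ A a = x ∧ ∑ i, a i = r := by
    rw [coneMap_apply, Prod.mk.injEq, Fintype.linearCombination_apply]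
  simp only [hull, hcone, Set.mem_smul_set]
  constructor
  · rintro ⟨_, ⟨a, ha, rfl⟩, rfl⟩
    exact ⟨r • a, smul_nonneg hr.le ha.1, map_smul A r a, by simp [← mul_sum, ha.2]⟩
  · rintro ⟨a, ha, rfl, hsum⟩
    refine ⟨_, ⟨r⁻¹ • a, ⟨smul_nonneg (inv_nonneg.2 hr.le) ha, ?_⟩, rfl⟩, ?_⟩
    · simp [← mul_sum, hsum, hr.ne']
    · rw [map_smul, smul_inv_smul₀ hr.ne']

lemma affineIndependent_coe_iff_coneMap {σ : Finset ι} :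
    AffineIndependent ℝ (fun i : σ => v i) ↔
      ∀ x, support x ⊆ σ → coneMap v x = 0 → x = 0 := by
  have hcone (x : ι → ℝ) (hx : support x ⊆ σ) :
      coneMap v x = 0 ↔ ∑ i : σ, x i = 0 ∧ ∑ i : σ, x i • v i = 0 := by
    have hzero (i : ι) (hi : i ∉ σ) : x i = 0 := notMem_support.1 (mt (@hx i) hi)
    rw [sum_coe_sort σ, sum_coe_sort σ fun i => x i • v i,
      sum_subset (subset_univ σ) fun i _ hi => hzero i hi,
      sum_subset (subset_univ σ) fun i _ hi => by rw [hzero i hi, zero_smul],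
      coneMap_apply, Prod.mk_eq_zero, and_comm]
  constructor
  · intro h x hx h0
    obtain ⟨hsum, hcomb⟩ := (hcone x hx).1 h0
    funext i
    by_contra hi
    exact hi (h.eq_zero_of_sum_eq_zero hsum hcomb ⟨i, hx hi⟩ (mem_univ _))
  · intro h
    refine (affineIndependent_iff_of_fintype ℝ _).2 fun w hw hcomb i => ?_
    rw [weightedVSub_eq_linear_combination _ hw] at hcomb
    have hext (j : σ) : extend Subtype.val w 0 j.1 = w j :=
      Subtype.val_injective.extend_apply w 0 j
    have hsupp : support (extend Subtype.val w (0 : ι → ℝ)) ⊆ σ := by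
      intro j hj
      by_contra hjσ
      exact hj (extend_apply' _ _ _ fun ⟨k, hk⟩ => hjσ (hk ▸ k.2))
    have hx := h _ hsupp ((hcone _ hsupp).2 (by simpa only [hext] using ⟨hw, hcomb⟩))
    rw [← hext, hx, Pi.zero_apply]

lemma isCompact_setOf_nonneg_coneMap_eq (v : ι → E) (a : ι → ℝ) :
    IsCompact {b | 0 ≤ b ∧ coneMap v b = coneMap v a} := by
  have hclosed : IsClosed {b | coneMap v b = coneMap v a} := by
    have := (Submodule.closed_of_finiteDimensional (coneMap v).ker).preimage
      (continuous_sub_right a)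
    simpa [Set.preimage, LinearMap.mem_ker, sub_eq_zero] using this
  refine (isCompact_Icc (a := 0) (b := fun _ => ∑ i, a i)).of_isClosed_subset
    (isClosed_Ici.inter hclosed) ?_
  rintro b ⟨hb, hba⟩
  refine ⟨hb, fun i => ?_⟩
  have hsum : ∑ i, b i = ∑ i, a i := by simpa only [coneMap_apply] using congrArg Prod.snd hba
  exact (single_le_sum (fun j _ => hb j) (mem_univ i)).trans_eq hsum

end Cone

section Triangulation

open Function

variable {ι E : Type*} [Fintype ι] [LinearOrder ι] [AddCommGroup E] [Module ℝ E]

lemma exists_isLexMin_coneMap_eq (v : ι → E) {a : ι → ℝ} (ha : 0 ≤ a) :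
    ∃ b, IsLexMin (coneMap v) b ∧ coneMap v b = coneMap v a := by
  obtain ⟨b, ⟨hb, hba⟩, hmin⟩ :=
    exists_toLex_le_of_isCompact (isCompact_setOf_nonneg_coneMap_eq v a) ⟨a, ha, rfl⟩
  exact ⟨b, ⟨hb, fun c hc hcb => hmin c ⟨hc, hcb.trans hba⟩⟩, hba⟩

/-- The placing triangulation of the convex hull of the `v i`, in which the points are placed from
the largest index to the smallest. A simplex, possibly empty, is recorded by the indices of its
vertices. -/
def placingTriangulation (v : ι → E) : Set (Finset ι) :=
  {σ | ∃ a, IsLexMin (coneMap v) a ∧ support a = σ}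

variable {v : ι → E} {σ : Finset ι}

lemma isLexMin_of_mem_placingTriangulation (hσ : σ ∈ placingTriangulation v) {a : ι → ℝ}
    (ha : 0 ≤ a) (hsupp : support a = σ) : IsLexMin (coneMap v) a := by
  obtain ⟨b, hb, hbσ⟩ := hσ
  exact hb.of_support_subset ha (hsupp.trans hbσ.symm).subset

lemma affineIndependent_of_mem_placingTriangulation (hσ : σ ∈ placingTriangulation v) :
    AffineIndependent ℝ (fun i : σ => v i) := by
  obtain ⟨a, ha, haσ⟩ := hσ
  exact affineIndependent_coe_iff_coneMap.2 fun x hx => ha.eq_zero_of_map_eq_zero (haσ ▸ hx)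

end Triangulation

section HalfOpenCone

open Finset Function

variable {ι E : Type*} [Fintype ι] [AddCommGroup E] [Module ℝ E]
  {L : AddSubgroup E} {v : ι → E} {σ : Finset ι} {n : ℕ}

/-- The points of `L` at height `n` in the relatively open cone over the simplex `σ`, given by their
coefficients with respect to the generators `(v i, 1)`. -/
def openConePoints (L : AddSubgroup E) (v : ι → E) (σ : Finset ι) (n : ℕ) : Set (ι → ℝ) :=
  {a | 0 ≤ a ∧ support a = σ ∧ (coneMap v a).1 ∈ L ∧ (coneMap v a).2 = n}

/-- The points of `L` at integral height in the half-open parallelepiped spanned by the generators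
`(v i, 1)` with `i ∈ σ`, given by their coefficients. -/
def boxPoints (L : AddSubgroup E) (v : ι → E) (σ : Finset ι) : Set (ι → ℝ) :=
  {t | (∀ i, t i ∈ Set.Ico 0 1) ∧ support t ⊆ σ ∧ (coneMap v t).1 ∈ L ∧
    ∃ k : ℕ, (coneMap v t).2 = k}

lemma fst_coneMap_natCast_mem (hv : ∀ i, v i ∈ L) (c : ι →₀ ℕ) :
    (coneMap v fun i => (c i : ℝ)).1 ∈ L := by
  simp only [coneMap_apply, Nat.cast_smul_eq_nsmul]
  exact sum_mem fun i _ => nsmul_mem (hv i) _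

lemma snd_coneMap_natCast (v : ι → E) (c : ι →₀ ℕ) :
    (coneMap v fun i => (c i : ℝ)).2 = c.degree := by
  simp [coneMap_apply, Finsupp.degree_eq_sum]

lemma natCeil_natCast_sub {c : ℕ} {t : ℝ} (ht : t ∈ Set.Ico 0 1) : ⌈(c : ℝ) - t⌉₊ = c := by
  obtain ⟨h0, h1⟩ := ht
  obtain rfl | hc := eq_or_ne c 0
  · simpa using h0
  · rw [Nat.ceil_eq_iff hc, Nat.cast_sub (Nat.one_le_iff_ne_zero.2 hc)]
    constructor <;> push_cast <;> linarith

lemma coneMap_natCast_sub (v : ι → E) (c : ι →₀ ℕ) (t : ι → ℝ) :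
    coneMap v (fun i => (c i : ℝ) - t i) = coneMap v (fun i => (c i : ℝ)) - coneMap v t :=
  map_sub (coneMap v) (fun i => (c i : ℝ)) t

lemma exists_eq_natCast_sub_of_mem_openConePoints (hv : ∀ i, v i ∈ L) {a : ι → ℝ}
    (ha : a ∈ openConePoints L v σ n) :
    ∃ c : ι →₀ ℕ, c.support = σ ∧ ∃ t ∈ boxPoints L v σ,
      (c.degree : ℝ) = n + (coneMap v t).2 ∧ (fun i => (c i : ℝ) - t i) = a := by
  obtain ⟨ha0, haσ, haL, han⟩ := ha
  let c : ι →₀ ℕ := Finsupp.equivFunOnFinite.symm fun i => ⌈a i⌉₊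
  have hcσ : c.support = σ := by
    ext i
    rw [← mem_coe (s := σ), ← haσ, mem_support, ← (show 0 ≤ a i from ha0 i).lt_iff_ne']
    simp [c]
  have hmap := coneMap_natCast_sub v c a
  have hle : n ≤ c.degree := by
    have : (coneMap v a).2 ≤ (coneMap v fun i => (c i : ℝ)).2 := by
      simp only [coneMap_apply]
      exact sum_le_sum fun i _ => Nat.le_ceil (a i)
    rwa [han, snd_coneMap_natCast, Nat.cast_le] at this
  refine ⟨c, hcσ, fun i => c i - a i, ⟨fun i => ⟨sub_nonneg.2 (Nat.le_ceil _), ?_⟩, ?_, ?_,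
    c.degree - n, ?_⟩, ?_, funext fun i => sub_sub_cancel _ _⟩
  · exact sub_lt_iff_lt_add'.2 (Nat.ceil_lt_add_one (ha0 i))
  · intro i hi
    rw [← haσ]
    contrapose! hi
    simp [c, notMem_support.1 hi]
  · rw [hmap]
    exact sub_mem (fst_coneMap_natCast_mem hv c) haL
  · rw [hmap, Prod.snd_sub, snd_coneMap_natCast, han, Nat.cast_sub hle]
  · rw [hmap, Prod.snd_sub, snd_coneMap_natCast, han, add_sub_cancel]

lemma sub_mem_openConePoints (hv : ∀ i, v i ∈ L) {c : ι →₀ ℕ} (hc : c.support = σ) {t : ι → ℝ}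
    (ht : t ∈ boxPoints L v σ) (hn : (c.degree : ℝ) = n + (coneMap v t).2) :
    (fun i => (c i : ℝ) - t i) ∈ openConePoints L v σ n := by
  obtain ⟨ht01, htσ, htL, -⟩ := ht
  have hmap := coneMap_natCast_sub v c t
  have hzero (i) (hi : i ∉ σ) : (c i : ℝ) - t i = 0 := by
    rw [Finsupp.notMem_support_iff.1 (hc ▸ hi), notMem_support.1 (mt (@htσ i) hi)]
    simp
  have hpos (i) (hi : i ∈ σ) : 0 < (c i : ℝ) - t i := by
    have : (1 : ℝ) ≤ c i := mod_cast Nat.one_le_iff_ne_zero.2 (Finsupp.mem_support_iff.1 (hc ▸ hi))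
    linarith [(ht01 i).2]
  refine ⟨fun i => ?_, ?_, ?_, ?_⟩
  · by_cases hi : i ∈ σ
    exacts [(hpos i hi).le, (hzero i hi).ge]
  · ext i
    by_cases hi : i ∈ σ
    · simp [hi, (hpos i hi).ne']
    · simp [hi, hzero i hi]
  · rw [hmap]
    exact sub_mem (fst_coneMap_natCast_mem hv c) htL
  · rw [hmap, Prod.snd_sub, snd_coneMap_natCast, hn, add_sub_cancel_right]

lemma openConePoints_eq_biUnion [DecidableEq ι] (hv : ∀ i, v i ∈ L) (n : ℕ) :
    openConePoints L v σ n = ⋃ t ∈ boxPoints L v σ,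
      (fun (c : ι →₀ ℕ) i => (c i : ℝ) - t i) ''
        compositionsOn σ (n + ⌊(coneMap v t).2⌋₊) := by
  have hfloor {t : ι → ℝ} (ht : t ∈ boxPoints L v σ) :
      (⌊(coneMap v t).2⌋₊ : ℝ) = (coneMap v t).2 := by
    obtain ⟨k, hk⟩ := ht.2.2.2
    rw [hk, Nat.floor_natCast]
  ext a
  simp only [Set.mem_iUnion₂, Set.mem_image, mem_coe, mem_compositionsOn, exists_prop]
  constructor
  · intro ha
    obtain ⟨c, hc, t, ht, hdeg, rfl⟩ := exists_eq_natCast_sub_of_mem_openConePoints hv ha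
    refine ⟨t, ht, c, ⟨hc, ?_⟩, rfl⟩
    rw [← hfloor ht] at hdeg
    exact_mod_cast hdeg
  · rintro ⟨t, ht, c, ⟨hc, hdeg⟩, rfl⟩
    exact sub_mem_openConePoints hv hc ht (by rw [hdeg, Nat.cast_add, hfloor ht])

end HalfOpenCone

section Finiteness

open Finset Function

variable {ι E : Type*} [NormedAddCommGroup E] [NormedSpace ℝ E] [FiniteDimensional ℝ E]
  {L : AddSubgroup E} [DiscreteTopology L] {v : ι → E} {σ : Finset ι}

lemma boxPoints_finite [Fintype ι] (hσ : AffineIndependent ℝ (fun i : σ => v i)) :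
    (boxPoints L v σ).Finite := by
  have hbox : boxPoints L v σ ⊆ Set.Icc 0 1 :=
    fun t ht => ⟨fun i => (ht.1 i).1, fun i => (ht.1 i).2.le⟩
  have hinj : Set.InjOn (coneMap v) (boxPoints L v σ) := by
    intro t ht u hu htu
    refine sub_eq_zero.1 (affineIndependent_coe_iff_coneMap.1 hσ _ ?_ ?_)
    · exact (support_sub t u).trans (Set.union_subset ht.2.1 hu.2.1)
    · rw [map_sub, htu, sub_self]
  have hbounded : Bornology.IsBounded ((fun t => (coneMap v t).1) '' Set.Icc 0 1) := by
    refine (isCompact_Icc.image (continuous_fst.comp ?_)).isBounded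
    exact (coneMap v).continuous_of_finiteDimensional
  have hLfin : ((fun t => (coneMap v t).1) '' Set.Icc 0 1 ∩ (L : Set E)).Finite :=
    Metric.finite_isBounded_inter_isClosed DiscreteTopology.isDiscrete hbounded
      AddSubgroup.isClosed_of_discrete
  refine .of_finite_image ((hLfin.prod
    ((Set.finite_Iic (Fintype.card ι)).image (Nat.cast : ℕ → ℝ))).subset ?_) hinj
  rintro _ ⟨t, ht, rfl⟩
  obtain ⟨-, -, htL, k, hk⟩ := id ht
  refine ⟨⟨⟨t, hbox ht, rfl⟩, htL⟩, k, ?_, hk.symm⟩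
  have hle : (coneMap v t).2 ≤ ∑ _i : ι, 1 := by
    rw [coneMap_apply]
    exact sum_le_sum fun i _ => (hbox ht).2 i
  simpa [hk] using hle

lemma openConePoints_finite [Fintype ι] (hv : ∀ i, v i ∈ L)
    (hσ : AffineIndependent ℝ (fun i : σ => v i)) (n : ℕ) : (openConePoints L v σ n).Finite := by
  classical
  rw [openConePoints_eq_biUnion hv]
  exact (boxPoints_finite hσ).biUnion fun t _ => (finite_toSet _).image _

end Finiteness

section Decomposition

open Function

variable {ι E : Type*} [Fintype ι] [LinearOrder ι] [AddCommGroup E] [Module ℝ E]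
  {L : AddSubgroup E} {v : ι → E}

lemma inter_smul_convexHull_range_eq_image {n : ℕ} (hn : 0 < n) :
    (L : Set E) ∩ (n : ℝ) • convexHull ℝ (Set.range v) =
      (fun a => (coneMap v a).1) '' ⋃ σ ∈ placingTriangulation v, openConePoints L v σ n := by
  ext x
  rw [Set.mem_inter_iff, mem_smul_convexHull_range_iff (by positivity), SetLike.mem_coe]
  simp only [Set.mem_image, Set.mem_iUnion₂, exists_prop]
  constructor
  · rintro ⟨hx, a, ha, hax⟩
    obtain ⟨b, hb, hba⟩ := exists_isLexMin_coneMap_eq v ha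
    have hsupp : support b = (Set.toFinite (support b)).toFinset := by simp
    rw [hax] at hba
    exact ⟨b, ⟨_, ⟨b, hb, hsupp⟩, hb.1, hsupp, by rwa [hba], by rw [hba]⟩, by rw [hba]⟩
  · rintro ⟨a, ⟨σ, -, ha, -, haL, han⟩, rfl⟩
    exact ⟨haL, a, ha, Prod.ext rfl han⟩

lemma injOn_fst_coneMap_biUnion_openConePoints (n : ℕ) :
    Set.InjOn (fun a => (coneMap v a).1)
      (⋃ σ ∈ placingTriangulation v, openConePoints L v σ n) := by
  intro a ha b hb hab
  obtain ⟨σ, hσ, ha0, haσ, -, han⟩ := Set.mem_iUnion₂.1 ha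
  obtain ⟨τ, hτ, hb0, hbτ, -, hbn⟩ := Set.mem_iUnion₂.1 hb
  exact (isLexMin_of_mem_placingTriangulation hσ ha0 haσ).eq_of_map_eq
    (isLexMin_of_mem_placingTriangulation hτ hb0 hbτ) (Prod.ext hab (han.trans hbn.symm))

end Decomposition

section WeightedSum

open Function

variable {ι κ : Type*} [Finite κ] {L : AddSubgroup (κ → ℝ)} [DiscreteTopology L] {v : ι → κ → ℝ}

lemma finsum_openConePoints_eval_mem_polyOnPos [Fintype ι] {σ : Finset ι}
    (hv : ∀ i, v i ∈ L) (hσ : AffineIndependent ℝ (fun i : σ => v i))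
    (f : MvPolynomial κ ℝ) :
    (fun n => ∑ᶠ a ∈ openConePoints L v σ n, MvPolynomial.eval (coneMap v a).1 f) ∈
      polyOnPos ℝ (σ.card - 1 + f.totalDegree) := by
  classical
  cases nonempty_fintype κ
  simp only [openConePoints_eq_biUnion hv]
  refine finsum_mem_biUnion_mem_polyOnPos (boxPoints_finite hσ) (fun n t ht u hu htu => ?_)
    (fun t _ n => (Finset.finite_toSet _).image _) fun t _ => ?_
  · refine Set.disjoint_left.2 ?_
    rintro _ ⟨c, -, rfl⟩ ⟨d, -, hdc⟩
    refine htu (funext fun i => ?_)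
    have hi : (d i : ℝ) - u i = c i - t i := congrFun hdc i
    have hcd : c i = d i := by
      rw [← natCeil_natCast_sub (c := c i) (ht.1 i), ← hi, natCeil_natCast_sub (hu.1 i)]
    rw [hcd] at hi
    linarith
  · let φ : (ι → ℝ) →ᵃ[ℝ] (κ → ℝ) := (LinearMap.fst ℝ _ ℝ ∘ₗ coneMap v).toAffineMap.comp
      (AffineMap.id ℝ _ - AffineMap.const ℝ _ t)
    obtain ⟨g, hg, hgf⟩ := exists_eval_affineMap_eq φ f
    have hinj : Injective fun (c : ι →₀ ℕ) i => (c i : ℝ) - t i :=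
      fun c d hcd => Finsupp.ext fun i => by simpa using congrFun hcd i
    simp only [finsum_mem_image hinj.injOn, finsum_mem_coe_finset]
    convert polyOnPos_mono (Nat.add_le_add_left hg _)
      (comp_add_mem_polyOnPos (sum_compositionsOn_eval_mem_polyOnPos σ g) ⌊(coneMap v t).2⌋₊)
      using 4 with n c
    exact (hgf fun i => (c i : ℝ)).symm

lemma finsum_inter_smul_convexHull_mem_polyOnPos [Finite ι] (hv : ∀ i, v i ∈ L)
    (f : MvPolynomial κ ℝ) :
    (fun n : ℕ => ∑ᶠ x ∈ (L : Set (κ → ℝ)) ∩ (n : ℝ) • convexHull ℝ (Set.range v),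
      MvPolynomial.eval x f) ∈
      polyOnPos ℝ (Module.finrank ℝ (vectorSpan ℝ (Set.range v)) + f.totalDegree) := by
  cases nonempty_fintype ι
  cases nonempty_fintype κ
  let := IsWellOrder.linearOrder (WellOrderingRel (α := ι))
  have htriang (n : ℕ) (hn : 0 < n) :
      ∑ᶠ x ∈ (L : Set (κ → ℝ)) ∩ (n : ℝ) • convexHull ℝ (Set.range v), MvPolynomial.eval x f =
        ∑ᶠ a ∈ ⋃ σ ∈ placingTriangulation v, openConePoints L v σ n,
          MvPolynomial.eval (coneMap v a).1 f := by
    rw [inter_smul_convexHull_range_eq_image hn,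
      finsum_mem_image (injOn_fst_coneMap_biUnion_openConePoints n)]
  refine mem_polyOnPos_congr htriang (finsum_mem_biUnion_mem_polyOnPos (Set.toFinite _)
    (fun n σ _ τ _ hστ => ?_) (fun σ hσ n => ?_) fun σ hσ => ?_)
  · exact Set.disjoint_left.2 fun a ha ha' =>
      hστ (Finset.coe_injective (ha.2.1.symm.trans ha'.2.1))
  · exact openConePoints_finite hv (affineIndependent_of_mem_placingTriangulation hσ) n
  · have hind := affineIndependent_of_mem_placingTriangulation hσ
    have := card_le_finrank_vectorSpan_add_one hind
    exact polyOnPos_mono (by lia) (finsum_openConePoints_eval_mem_polyOnPos hv hind f)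

theorem stmt13_general [Finite ι] (hv : ∀ i, v i ∈ L) {P : Set (κ → ℝ)}
    (hP : P = convexHull ℝ (Set.range v)) {f : MvPolynomial κ ℝ} {p : ℕ} (hf : f.totalDegree ≤ p) :
    ∃ q : Polynomial ℝ,
      q.natDegree ≤ Module.finrank ℝ (affineSpan ℝ P).direction + p ∧
      ∀ n : ℕ, 0 < n →
        ∑ᶠ x ∈ (L : Set (κ → ℝ)) ∩ (n : ℝ) • P, MvPolynomial.eval x f = q.eval (n : ℝ) := by
  rw [hP, affineSpan_convexHull, direction_affineSpan]
  exact polyOnPos_mono (Nat.add_le_add_left hf _)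
    (finsum_inter_smul_convexHull_mem_polyOnPos hv f)

end WeightedSum

section IntegerLattice

open Submodule

variable {ι : Type*} [Finite ι]

lemma coe_span_int_range_basisFun :
    (span ℤ (Set.range (Pi.basisFun ℝ ι)) : Set (ι → ℝ)) =
      Set.range fun (z : ι → ℤ) i => (z i : ℝ) := by
  ext x
  rw [SetLike.mem_coe, (Pi.basisFun ℝ ι).mem_span_iff_repr_mem ℤ x]
  simp [funext_iff, Classical.skolem]

lemma finsum_indicator_intCast {M : Type*} [AddCommMonoid M] (S : Set (ι → ℝ))
    (g : (ι → ℝ) → M) :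
    ∑ᶠ z : ι → ℤ, S.indicator g (fun i => (z i : ℝ)) =
      ∑ᶠ x ∈ (span ℤ (Set.range (Pi.basisFun ℝ ι)) : Set (ι → ℝ)) ∩ S, g x := by
  have hinj : Function.Injective fun (z : ι → ℤ) i => (z i : ℝ) := Int.cast_injective.comp_left
  rw [coe_span_int_range_basisFun, finsum_mem_def, ← Set.indicator_indicator, ← finsum_mem_def,
    finsum_mem_range hinj]

end IntegerLattice

/-- Weighted Ehrhart polynomiality: for a lattice polytope P ⊆ ℝ^m (convex hull of
finitely many integer points) and a polynomial f of total degree ≤ p, the weighted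
lattice-point count L_{P,f}(n) = ∑_{z ∈ nP ∩ ℤ^m} f(z) agrees, for all positive
integers n, with a polynomial in n of degree at most dim P + p. -/
theorem stmt13 (m p : ℕ) (P : Set (Fin m → ℝ)) (s : Finset (Fin m → ℤ))
    (hP : P = convexHull ℝ ((fun z : Fin m → ℤ => fun i => (z i : ℝ)) '' ↑s))
    (f : MvPolynomial (Fin m) ℝ) (hf : f.totalDegree ≤ p) :
    ∃ q : Polynomial ℝ,
      q.natDegree ≤ Module.finrank ℝ (affineSpan ℝ P).direction + p ∧
      ∀ n : ℕ, 0 < n →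
        (∑ᶠ z : Fin m → ℤ,
            Set.indicator ((n : ℝ) • P) (fun x => MvPolynomial.eval x f)
              (fun i => (z i : ℝ))) =
          q.eval (n : ℝ) := by
  obtain ⟨q, hdeg, hq⟩ := stmt13_general
    (L := (Submodule.span ℤ (Set.range (Pi.basisFun ℝ (Fin m)))).toAddSubgroup)
    (v := fun (z : s) i => (z.1 i : ℝ))
    (fun z => (coe_span_int_range_basisFun (ι := Fin m)).ge ⟨z.1, rfl⟩)
    (hP.trans (by rw [Set.image_eq_range]; rfl)) hf
  exact ⟨q, hdeg, fun n hn => (finsum_indicator_intCast _ _).trans (hq n hn)⟩
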